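/- arXiv:1506.04036 — 2 statements merged into one kernel-verified Lean document; each statement's English description precedes it below -/
import Mathlib

section
/- (Relative alternative Singleton bound.) If n > m, then for all nested F_{q^m}-linear codes C_2 ⊊ C_1 ⊆ F_{q^m}^n with k_i = dim C_i (i = 1, 2) and every 1 ≤ r ≤ k_1 − k_2, one has M_{R,r}(C_1, C_2) ≤ m(n − k_1)/(n − k_2) + m(r − 1) + 1; equivalently, (n − k_2) · (M_{R,r}(C_1, C_2) − m(r − 1) − 1) ≤ m(n − k_1). -/
open Submodule Module

namespace RankPaper

variable {n : ℕ}

/-- The coordinatewise `q^i`-th power map on `Fqm^n`. -/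
def qpowMap (q i : ℕ) {Fqm : Type} [Field Fqm] (v : Fin n → Fqm) : Fin n → Fqm :=
  fun j => v j ^ q ^ i

/-- The Galois closure `D* = Σ_{i=0}^{m-1} D^{q^i}` of a subspace (as the span of the
union of the images of `D` under the coordinatewise `q^i`-power maps, `0 ≤ i < m`). -/
def galClosure (q m : ℕ) {Fqm : Type} [Field Fqm] (D : Submodule Fqm (Fin n → Fqm)) :
    Submodule Fqm (Fin n → Fqm) :=
  Submodule.span Fqm (⋃ i ∈ Finset.range m, qpowMap q i '' (D : Set (Fin n → Fqm)))

/-- `D` is Galois closed if `D = D*`. -/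
def GaloisClosed (q m : ℕ) {Fqm : Type} [Field Fqm] (D : Submodule Fqm (Fin n → Fqm)) : Prop :=
  galClosure q m D = D

/-- Rank weight of a subspace: `wt_R(D) = dim_{Fqm} D*`. -/
noncomputable def wtR (q m : ℕ) {Fqm : Type} [Field Fqm]
    (D : Submodule Fqm (Fin n → Fqm)) : ℕ :=
  finrank Fqm (galClosure q m D)

/-- Rank weight of a vector: `wt_R(c) = wt_R(span {c})`. -/
noncomputable def wtRv (q m : ℕ) {Fqm : Type} [Field Fqm] (c : Fin n → Fqm) : ℕ :=
  wtR q m (Submodule.span Fqm ({c} : Set (Fin n → Fqm)))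

/-- Hamming weight of a subspace: the number of coordinates where some element is nonzero. -/
noncomputable def wtH {Fqm : Type} [Field Fqm] (D : Submodule Fqm (Fin n → Fqm)) : ℕ :=
  {i : Fin n | ∃ d ∈ D, d i ≠ 0}.ncard

/-- `r`-th generalized rank weight of a linear code. -/
noncomputable def dR (q m : ℕ) {Fqm : Type} [Field Fqm]
    (C : Submodule Fqm (Fin n → Fqm)) (r : ℕ) : ℕ :=
  sInf { dv | ∃ V : Submodule Fqm (Fin n → Fqm),
    GaloisClosed q m V ∧ r ≤ finrank Fqm ↥(C ⊓ V) ∧ dv = finrank Fqm ↥V }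

/-- `r`-th generalized Hamming weight of a linear code. -/
noncomputable def dH {Fqm : Type} [Field Fqm]
    (C : Submodule Fqm (Fin n → Fqm)) (r : ℕ) : ℕ :=
  sInf { w | ∃ D : Submodule Fqm (Fin n → Fqm), D ≤ C ∧ finrank Fqm ↥D = r ∧ w = wtH D }

/-- `r`-th relative generalized rank weight of a nested code pair. -/
noncomputable def MR (q m : ℕ) {Fqm : Type} [Field Fqm]
    (C₁ C₂ : Submodule Fqm (Fin n → Fqm)) (r : ℕ) : ℕ :=
  sInf { dv | ∃ V : Submodule Fqm (Fin n → Fqm), GaloisClosed q m V ∧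
    r ≤ finrank Fqm ↥(C₁ ⊓ V) - finrank Fqm ↥(C₂ ⊓ V) ∧ dv = finrank Fqm ↥V }

/-- Minimum rank distance of an arbitrary (possibly nonlinear) code. -/
noncomputable def dRset (q m : ℕ) {Fqm : Type} [Field Fqm] (C : Set (Fin n → Fqm)) : ℕ :=
  sInf { w | ∃ c₁ ∈ C, ∃ c₂ ∈ C, c₁ ≠ c₂ ∧ w = wtRv q m (c₁ - c₂) }

/-- The linear functional `x ↦ Σ_j x_j y_j` (dot product with `y`). -/
def dotLin {K : Type} [Field K] (y : Fin n → K) : (Fin n → K) →ₗ[K] K :=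
  ∑ j, y j • LinearMap.proj j

/-- Orthogonal complement of a subspace with respect to the standard bilinear form. -/
def perp {K : Type} [Field K] (L : Submodule K (Fin n → K)) : Submodule K (Fin n → K) :=
  ⨅ y ∈ L, LinearMap.ker (dotLin y)

/-- The coordinatewise inclusion `Fq^n → Fqm^n`. -/
def embFq (Fq Fqm : Type) [Field Fq] [Field Fqm] [Algebra Fq Fqm] :
    (Fin n → Fq) →ₗ[Fq] (Fin n → Fqm) :=
  LinearMap.pi fun j => (Algebra.linearMap Fq Fqm).comp (LinearMap.proj j)

/-- `V_L = L ⊗ Fqm`, the `Fqm`-span of `L ⊆ Fq^n` inside `Fqm^n`. -/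
def VL {Fq : Type} (Fqm : Type) [Field Fq] [Field Fqm] [Algebra Fq Fqm]
    (L : Submodule Fq (Fin n → Fq)) : Submodule Fqm (Fin n → Fqm) :=
  Submodule.span Fqm (embFq Fq Fqm '' (L : Set (Fin n → Fq)))

/-- Rank-punctured code `C^L`: the image of `C` in `Fqm^n / V_{L^⊥}`. -/
noncomputable def punct {Fq Fqm : Type} [Field Fq] [Field Fqm] [Algebra Fq Fqm]
    (L : Submodule Fq (Fin n → Fq)) (C : Submodule Fqm (Fin n → Fqm)) :
    Submodule Fqm ((Fin n → Fqm) ⧸ VL Fqm (perp L)) :=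
  Submodule.map (VL Fqm (perp L)).mkQ C


theorem span_emb_closed (Fq Fqm : Type) [Field Fq] [Field Fqm] [Algebra Fq Fqm] [Finite Fqm]
    (m : ℕ) (hm : 0 < m) (S : Set (Fin n → Fq)) :
    GaloisClosed (Nat.card Fq) m (Submodule.span Fqm (embFq Fq Fqm '' S)) := by
  have : Finite Fq := Finite.of_injective _ (algebraMap Fq Fqm).injective
  have := Fintype.ofFinite Fq
  have key : ∀ i : ℕ, ∃ σ : Fqm →ₐ[Fq] Fqm, ∀ x, σ x = x ^ (Nat.card Fq) ^ i := by
    intro i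
    induction i with
    | zero => exact ⟨AlgHom.id _ _, by simp⟩
    | succ i ih =>
      obtain ⟨σ, hσ⟩ := ih
      refine ⟨(FiniteField.frobeniusAlgHom Fq Fqm).comp σ, fun x => ?_⟩
      simp [hσ, pow_succ, pow_mul]
  apply le_antisymm
  · unfold galClosure
    rw [Submodule.span_le]
    intro y hy
    simp only [Set.mem_iUnion] at hy
    obtain ⟨i, -, v, hv, rfl⟩ := hy
    obtain ⟨σ, hσ⟩ := key i
    have hq : ∀ v : Fin n → Fqm, qpowMap (Nat.card Fq) i v = fun j => σ (v j) := by
      intro v; funext j; simp [qpowMap, hσ]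
    rw [hq]
    simp only [SetLike.mem_coe] at hv ⊢
    induction hv using Submodule.span_induction with
    | mem x hx =>
      obtain ⟨s, hs, rfl⟩ := hx
      have : (fun j => σ (embFq Fq Fqm s j)) = embFq Fq Fqm s := by
        funext j; simp [embFq]
      rw [this]
      exact Submodule.subset_span ⟨s, hs, rfl⟩
    | zero =>
      have h0 : (fun j => σ ((0 : Fin n → Fqm) j)) = 0 := by
        funext j; simp
      rw [h0]
      exact Submodule.zero_mem _
    | add x y _ _ hx hy =>
      have := Submodule.add_mem _ hx hy
      convert this using 1
      funext j; simp
    | smul a x _ hx =>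
      have := Submodule.smul_mem _ (σ a) hx
      convert this using 1
      funext j; simp
  · intro v hv
    apply Submodule.subset_span
    simp only [Set.mem_iUnion]
    exact ⟨0, Finset.mem_range.2 hm, v, hv, by funext j; simp [qpowMap]⟩

/-- A vector with coordinates in the span of `t` elements lies in a span of `t` rational vectors. -/
theorem mem_span_emb (Fq Fqm : Type) [Field Fq] [Field Fqm] [Algebra Fq Fqm]
    {t : ℕ} (b : Fin t → Fqm) (w : Fin t → Fin n → Fq) :
    (fun j => ∑ a, w a j • b a) ∈ Submodule.span Fqm (embFq Fq Fqm '' (Set.range w)) := by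
  have : (fun j => ∑ a, w a j • b a) = ∑ a, b a • embFq Fq Fqm (w a) := by
    funext j
    simp [embFq, Algebra.smul_def, mul_comm]
  rw [this]
  exact Submodule.sum_mem _ fun a _ => Submodule.smul_mem _ _
    (Submodule.subset_span ⟨_, ⟨a, rfl⟩, rfl⟩)

theorem info_set {F : Type} [Field F] (C : Submodule F (Fin n → F)) :
    ∃ (κ : Type) (_ : Fintype κ) (φ : κ → Fin n), Function.Injective φ ∧
      Fintype.card κ + finrank F C = n ∧
      ∀ x : κ → F, (∑ k, x k • (Pi.single (φ k) (1:F) : Fin n → F)) ∈ C → x = 0 := by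
  obtain ⟨κ, a, ha, hs, hl⟩ := exists_linearIndependent' F
    (fun j : Fin n => C.mkQ (Pi.single j (1:F) : Fin n → F))
  have : Finite κ := Finite.of_injective a ha
  let := Fintype.ofFinite κ
  refine ⟨κ, inferInstance, a, ha, ?_, ?_⟩
  · have h1 : Submodule.span F (Set.range fun j : Fin n => C.mkQ (Pi.single j (1:F) : Fin n → F)) = ⊤ := by
      have h2 : (Set.range fun j : Fin n => C.mkQ (Pi.single j (1:F) : Fin n → F))
          = C.mkQ '' Set.range (fun j : Fin n => (Pi.single j (1:F) : Fin n → F)) := by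
        rw [← Set.range_comp]; rfl
      have h3 := (Pi.basisFun F (Fin n)).span_eq
      have h4 : Set.range (fun j : Fin n => (Pi.single j (1:F) : Fin n → F)) = Set.range (Pi.basisFun F (Fin n)) := by
        congr 1; funext j; simp
      rw [h2, h4, Submodule.span_image, h3, Submodule.map_top, Submodule.range_mkQ]
    have hb := Module.finrank_eq_card_basis (Basis.mk hl (by rw [hs, h1]))
    have := C.finrank_quotient_add_finrank
    rw [hb] at this
    simpa using this
  · intro x hx
    have : ∑ k, x k • C.mkQ (Pi.single (a k) (1:F) : Fin n → F) = 0 := by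
      rw [← C.ker_mkQ, LinearMap.mem_ker, map_sum] at hx
      simpa only [map_smul] using hx
    funext k
    exact Fintype.linearIndependent_iff.1 hl x this k

theorem exists_first (Fq Fqm : Type) [Field Fq] [Field Fqm] [Algebra Fq Fqm] [Finite Fqm]
    (C : Submodule Fqm (Fin n → Fqm)) (κ : Type) [Fintype κ] (φ : κ → Fin n)
    (hφ : Function.Injective φ) (t : ℕ) (ht : t ≤ finrank Fq Fqm)
    (hlt : finrank Fq Fqm * (n - finrank Fqm C) < Fintype.card κ * t) :
    ∃ x : κ → Fqm, x ≠ 0 ∧ (∑ k, x k • (Pi.single (φ k) (1:Fqm) : Fin n → Fqm)) ∈ C ∧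
      ∃ w : Fin t → Fin n → Fq, (∑ k, x k • (Pi.single (φ k) (1:Fqm) : Fin n → Fqm)) ∈
        Submodule.span Fqm (embFq Fq Fqm '' (Set.range w)) := by
  classical
  have : Module.Finite Fq Fqm := Module.Finite.of_finite
  let b : Fin t → Fqm := fun a => finBasis Fq Fqm (Fin.castLE ht a)
  have hb : LinearIndependent Fq b :=
    (finBasis Fq Fqm).linearIndependent.comp _ (Fin.castLE_injective ht)
  let T : (κ → Fin t → Fq) →ₗ[Fq] (Fin n → Fqm) :=
    { toFun := fun y => ∑ k, (∑ a, y k a • b a) • (Pi.single (φ k) (1:Fqm) : Fin n → Fqm)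
      map_add' := by
        intro y z
        simp [add_smul, Finset.sum_add_distrib]
      map_smul' := by
        intro c y
        simp [mul_smul, Finset.smul_sum, Finset.sum_smul] }
  have hT : ∀ y, T y = ∑ k, (∑ a, y k a • b a) • (Pi.single (φ k) (1:Fqm) : Fin n → Fqm) :=
    fun _ => rfl
  have hker : LinearMap.ker ((C.mkQ.restrictScalars Fq) ∘ₗ T) ≠ ⊥ := by
    apply LinearMap.ker_ne_bot_of_finrank_lt
    have h1 := Module.finrank_mul_finrank Fq Fqm ((Fin n → Fqm) ⧸ C)
    have h2 := C.finrank_quotient_add_finrank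
    simp only [finrank_fin_fun] at h2
    have h3 : finrank Fqm ((Fin n → Fqm) ⧸ C) = n - finrank Fqm C := by omega
    rw [← h1, h3]
    simpa [Module.finrank_pi_fintype] using hlt
  obtain ⟨y, hy, hy0⟩ := Submodule.exists_mem_ne_zero_of_ne_bot hker
  refine ⟨fun k => ∑ a, y k a • b a, ?_, ?_, ?_⟩
  · intro h
    apply hy0
    funext k a
    exact Fintype.linearIndependent_iff.1 hb (y k) (congrFun h k) a
  · rw [← hT]
    simpa using hy
  · refine ⟨fun a j => ∑ k, if φ k = j then y k a else 0, ?_⟩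
    convert mem_span_emb Fq Fqm b _ using 1
    funext j
    simp only [Finset.sum_apply, Pi.smul_apply, smul_eq_mul, Finset.sum_smul, Pi.single_apply]
    rw [Finset.sum_comm]
    refine Finset.sum_congr rfl fun a _ => Finset.sum_congr rfl fun k _ => ?_
    by_cases h : φ k = j
    · simp [h]
    · simp [h, Ne.symm h]

theorem exists_step (Fq Fqm : Type) [Field Fq] [Field Fqm] [Algebra Fq Fqm] [Finite Fqm]
    (E : Submodule Fqm (Fin n → Fqm)) (t : ℕ)
    (D₀ : Submodule Fqm (Fin n → Fqm)) (h₀ : D₀ ≤ E) (h1 : 1 ≤ finrank Fqm D₀)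
    (S₀ : Set (Fin n → Fq)) (hS₀ : S₀.Finite) (hc : S₀.ncard ≤ t)
    (hD₀ : D₀ ≤ Submodule.span Fqm (embFq Fq Fqm '' S₀)) (r : ℕ) (hr : r + 1 ≤ finrank Fqm E) :
    ∃ D ≤ E, r + 1 ≤ finrank Fqm D ∧ ∃ S : Set (Fin n → Fq), S.Finite ∧
      S.ncard ≤ t + finrank Fq Fqm * r ∧ D ≤ Submodule.span Fqm (embFq Fq Fqm '' S) := by
  have : Module.Finite Fq Fqm := Module.Finite.of_finite
  induction r with
  | zero => exact ⟨D₀, h₀, h1, S₀, hS₀, by simpa using hc, hD₀⟩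
  | succ r ih =>
    obtain ⟨D, hDE, hDr, S, hS, hSc, hDS⟩ := ih (by omega)
    by_cases hge : r + 1 + 1 ≤ finrank Fqm D
    · exact ⟨D, hDE, hge, S, hS, hSc.trans (by gcongr; omega), hDS⟩
    have hne : ¬ E ≤ D := fun h => by
      have := Submodule.finrank_mono h
      omega
    obtain ⟨x, hxE, hxD⟩ := SetLike.not_le_iff_exists.1 hne
    let w : Fin (finrank Fq Fqm) → Fin n → Fq := fun a j => (finBasis Fq Fqm).repr (x j) a
    have hx : x ∈ Submodule.span Fqm (embFq Fq Fqm '' (Set.range w)) := by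
      convert mem_span_emb Fq Fqm (finBasis Fq Fqm) w using 1
      funext j
      exact ((finBasis Fq Fqm).sum_repr (x j)).symm
    refine ⟨D ⊔ Submodule.span Fqm {x}, sup_le hDE (by simpa using hxE), ?_, S ∪ Set.range w,
      hS.union (Set.finite_range w), ?_, ?_⟩
    · have : D < D ⊔ Submodule.span Fqm {x} := by
        refine lt_of_le_of_ne le_sup_left fun h => hxD ?_
        rw [h]
        exact Submodule.mem_sup_right (Submodule.mem_span_singleton_self x)
      have := Submodule.finrank_lt_finrank_of_lt this
      omega
    · have h2 : (Set.range w).ncard ≤ finrank Fq Fqm := by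
        rw [← Set.image_univ]
        refine (Set.ncard_image_le Set.finite_univ).trans ?_
        simp [Set.ncard_univ]
      have := Set.ncard_union_le S (Set.range w)
      rw [mul_add, mul_one]
      omega
    · rw [Set.image_union, Submodule.span_union]
      refine sup_le (hDS.trans le_sup_left) ?_
      rw [Submodule.span_singleton_le_iff_mem]
      exact Submodule.mem_sup_right hx

/-- relative alternative Singleton bound: if `n > m`, then for nested
codes `C₂ ⊊ C₁ ⊆ Fqm^n` with `kᵢ = dim Cᵢ` and every `1 ≤ r ≤ k₁ − k₂`,
`(n − k₂) · (M_{R,r}(C₁,C₂) − m(r−1) − 1) ≤ m(n − k₁)`. -/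
theorem stmt12 (q m n k₁ k₂ r : ℕ) (Fq Fqm : Type) [Field Fq] [Field Fqm] [Algebra Fq Fqm]
    [Finite Fqm] (hq : Nat.card Fq = q) (hm : finrank Fq Fqm = m) (hmn : m < n)
    (C₁ C₂ : Submodule Fqm (Fin n → Fqm)) (hC : C₂ < C₁)
    (hk₁ : finrank Fqm C₁ = k₁) (hk₂ : finrank Fqm C₂ = k₂)
    (hr1 : 1 ≤ r) (hrk : r ≤ k₁ - k₂) :
    ((n : ℤ) - (k₂ : ℤ)) * ((MR q m C₁ C₂ r : ℤ) - (m : ℤ) * ((r : ℤ) - 1) - 1)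
      ≤ (m : ℤ) * ((n : ℤ) - (k₁ : ℤ)) := by
  subst hq hm hk₁ hk₂
  classical
  have : Module.Finite Fq Fqm := Module.Finite.of_finite
  have hm : 0 < finrank Fq Fqm := finrank_pos
  have hk1n : finrank Fqm C₁ ≤ n := by
    simpa using Submodule.finrank_le C₁
  have hk12 := Submodule.finrank_lt_finrank_of_lt hC
  obtain ⟨κ, _, φ, hφ, hcard, hinj⟩ := info_set C₂
  -- choose the least admissible `t`
  have hex : ∃ t, finrank Fq Fqm * (n - finrank Fqm C₁) < Fintype.card κ * t := by
    refine ⟨finrank Fq Fqm, ?_⟩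
    rw [mul_comm (Fintype.card κ)]
    exact Nat.mul_lt_mul_of_pos_left (by omega) hm
  obtain ⟨t, ht, hmin⟩ : ∃ t, finrank Fq Fqm * (n - finrank Fqm C₁) < Fintype.card κ * t ∧
      ∀ s < t, ¬ finrank Fq Fqm * (n - finrank Fqm C₁) < Fintype.card κ * s :=
    ⟨Nat.find hex, Nat.find_spec hex, fun s hs => Nat.find_min hex hs⟩
  have htm : t ≤ finrank Fq Fqm := by
    by_contra hlt
    refine hmin _ (not_le.1 hlt) ?_
    rw [mul_comm (Fintype.card κ)]
    exact Nat.mul_lt_mul_of_pos_left (by omega) hm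
  have ht0 : 0 < t := by
    rcases Nat.eq_zero_or_pos t with h | h
    · simp [h] at ht
    · exact h
  have hbd : Fintype.card κ * (t - 1) ≤ finrank Fq Fqm * (n - finrank Fqm C₁) :=
    not_lt.1 (hmin (t - 1) (by omega))
  obtain ⟨x, hx0, hxC, w, hxw⟩ := exists_first Fq Fqm C₁ κ φ hφ t htm ht
  -- the coordinate subspace
  let Φ : (κ → Fqm) →ₗ[Fqm] (Fin n → Fqm) :=
    Fintype.linearCombination Fqm (fun k => (Pi.single (φ k) (1:Fqm) : Fin n → Fqm))
  have hΦ : ∀ y, Φ y = ∑ k, y k • (Pi.single (φ k) (1:Fqm) : Fin n → Fqm) := fun _ => rfl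
  have hΦinj : Function.Injective Φ := by
    rw [← LinearMap.ker_eq_bot, LinearMap.ker_eq_bot']
    intro y hy
    apply hinj
    rw [← hΦ, hy]
    exact Submodule.zero_mem _
  let E : Submodule Fqm (Fin n → Fqm) := C₁ ⊓ LinearMap.range Φ
  have hE2 : Disjoint E C₂ := by
    rw [Submodule.disjoint_def]
    rintro _ ⟨_, y, rfl⟩ hy
    have : y = 0 := hinj y hy
    rw [this, map_zero]
  have hEr : r ≤ finrank Fqm E := by
    have h1 := Submodule.finrank_sup_add_finrank_inf_eq C₁ (LinearMap.range Φ)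
    have h2 : finrank Fqm (LinearMap.range Φ) = Fintype.card κ := by
      rw [LinearMap.finrank_range_of_inj hΦinj]; simp
    have h3 : finrank Fqm ↥(C₁ ⊔ LinearMap.range Φ) ≤ n := by
      simpa using Submodule.finrank_le (C₁ ⊔ LinearMap.range Φ)
    change r ≤ finrank Fqm ↥(C₁ ⊓ LinearMap.range Φ)
    omega
  have hxne : Φ x ≠ 0 := fun h => hx0 (hΦinj (by rw [h, map_zero]))
  have hwc : (Set.range w).ncard ≤ t := by
    rw [← Set.image_univ]
    refine (Set.ncard_image_le Set.finite_univ).trans ?_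
    simp [Set.ncard_univ]
  obtain ⟨D, hDE, hDr, S, hS, hSc, hDS⟩ := exists_step Fq Fqm E t (Submodule.span Fqm {Φ x})
    (by rw [Submodule.span_singleton_le_iff_mem]; exact ⟨hxC, x, rfl⟩)
    (by rw [finrank_span_singleton hxne])
    (Set.range w) (Set.finite_range w) hwc
    (by rw [Submodule.span_singleton_le_iff_mem]; exact hxw) (r - 1) (by omega)
  set V := Submodule.span Fqm (embFq Fq Fqm '' S) with hV
  have hVc : finrank Fqm V ≤ t + finrank Fq Fqm * (r - 1) := by
    refine le_trans ?_ hSc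
    refine le_trans ?_ (Set.ncard_image_le (f := embFq Fq Fqm) hS)
    have := (hS.image (embFq Fq Fqm)).fintype
    have := finrank_span_le_card (R := Fqm) (embFq Fq Fqm '' S)
    rwa [Set.ncard_eq_toFinset_card']
  have hMR : MR (Nat.card Fq) (finrank Fq Fqm) C₁ C₂ r ≤ finrank Fqm V := by
    apply Nat.sInf_le
    refine ⟨V, span_emb_closed Fq Fqm _ hm S, ?_, rfl⟩
    have h1 := Submodule.finrank_sup_add_finrank_inf_eq D (C₂ ⊓ V)
    have h2 : D ⊓ (C₂ ⊓ V) = ⊥ :=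
      (hE2.mono hDE inf_le_left).eq_bot
    have h3 : finrank Fqm ↥(D ⊔ (C₂ ⊓ V)) ≤ finrank Fqm ↥(C₁ ⊓ V) :=
      Submodule.finrank_mono (sup_le (le_inf (hDE.trans inf_le_left) hDS)
        (inf_le_inf_right _ hC.le))
    rw [h2, finrank_bot] at h1
    omega
  have hM := hMR.trans hVc
  have e1 : (n : ℤ) - (finrank Fqm C₂ : ℤ) = (Fintype.card κ : ℤ) := by
    omega
  have e2 : (MR (Nat.card Fq) (finrank Fq Fqm) C₁ C₂ r : ℤ)
      - (finrank Fq Fqm : ℤ) * ((r : ℤ) - 1) - 1 ≤ (t : ℤ) - 1 := by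
    have := (Int.ofNat_le.2 hM)
    push_cast [Nat.cast_sub hr1] at this
    linarith
  have e3 : (Fintype.card κ : ℤ) * ((t : ℤ) - 1)
      ≤ (finrank Fq Fqm : ℤ) * ((n : ℤ) - (finrank Fqm C₁ : ℤ)) := by
    have := (Int.ofNat_le.2 hbd)
    push_cast [Nat.cast_sub hk1n, Nat.cast_sub ht0] at this
    linarith
  rw [e1]
  exact (mul_le_mul_of_nonneg_left e2 (by positivity)).trans e3

end RankPaper
end

section
/- (Generalized Forney lemma.) For every F_{q^m}-linear code C ⊆ F_{q^m}^n of dimension k and every F_q-subspace L ⊆ F_q^n, one has dim_{F_{q^m}}(C^L) = dim_{F_q} L − dim_{F_{q^m}}((C^⊥)_L) = k − dim_{F_{q^m}}(C_{L^⊥}). -/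
open Submodule Module

namespace RankPaper

variable {n : ℕ}

/-- The standard bilinear form. -/
def stdB (K : Type) [Field K] (n : ℕ) : LinearMap.BilinForm K (Fin n → K) :=
  dotProductBilin K K

theorem stdB_apply {K : Type} [Field K] (x y : Fin n → K) : stdB K n x y = x ⬝ᵥ y := rfl

theorem stdB_isRefl (K : Type) [Field K] (n : ℕ) : (stdB K n).IsRefl := by
  intro x y h
  rw [stdB_apply] at *
  rw [dotProduct_comm, h]

theorem stdB_nondeg (K : Type) [Field K] (n : ℕ) : (stdB K n).Nondegenerate := by
  refine ⟨fun x hx => ?_, fun x hx => ?_⟩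
  · ext j
    have := hx (Pi.single j 1)
    simpa [stdB_apply] using this
  · ext j
    have := hx (Pi.single j 1)
    simpa [stdB_apply] using this

theorem mem_perp {K : Type} [Field K] (W : Submodule K (Fin n → K)) (x : Fin n → K) :
    x ∈ perp W ↔ ∀ y ∈ W, y ⬝ᵥ x = 0 := by
  simp [perp, dotLin, dotProduct, Submodule.mem_iInf]

theorem perp_eq {K : Type} [Field K] (W : Submodule K (Fin n → K)) :
    perp W = (stdB K n).orthogonal W := by
  ext x
  rw [mem_perp, LinearMap.BilinForm.mem_orthogonal_iff]
  rfl

theorem perp_perp {K : Type} [Field K] (W : Submodule K (Fin n → K)) : perp (perp W) = W := by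
  rw [perp_eq, perp_eq,
    LinearMap.BilinForm.orthogonal_orthogonal (stdB_nondeg K n) (stdB_isRefl K n)]

theorem finrank_perp {K : Type} [Field K] (W : Submodule K (Fin n → K)) :
    finrank K W + finrank K (perp W) = n := by
  have h := LinearMap.BilinForm.finrank_orthogonal (stdB_nondeg K n) W
  have h2 := Submodule.finrank_le W
  rw [perp_eq]
  simp only [finrank_fin_fun] at h h2
  omega

theorem perp_sup {K : Type} [Field K] (U W : Submodule K (Fin n → K)) :
    perp (U ⊔ W) = perp U ⊓ perp W := by
  ext x
  simp only [Submodule.mem_inf, mem_perp]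
  constructor
  · intro h
    exact ⟨fun y hy => h y (Submodule.mem_sup_left hy), fun y hy => h y (Submodule.mem_sup_right hy)⟩
  · rintro ⟨h1, h2⟩ y hy
    obtain ⟨a, ha, b, hb, rfl⟩ := Submodule.mem_sup.1 hy
    rw [add_dotProduct, h1 a ha, h2 b hb, add_zero]

section ext
variable {Fq Fqm : Type} [Field Fq] [Field Fqm] [Algebra Fq Fqm]

theorem finrank_VL_le (L : Submodule Fq (Fin n → Fq)) :
    finrank Fqm (VL Fqm L) ≤ finrank Fq L := by
  let b := Module.finBasis Fq L
  have hle : VL Fqm L ≤ span Fqm (Set.range fun i => embFq Fq Fqm (b i : Fin n → Fq)) := by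
    refine Submodule.span_le.2 ?_
    rintro _ ⟨x, hx, rfl⟩
    have := congrArg (Subtype.val) (b.sum_repr ⟨x, hx⟩)
    simp only [AddSubmonoidClass.coe_finset_sum, Submodule.coe_smul] at this
    rw [← this, map_sum]
    refine Submodule.sum_mem _ fun i _ => ?_
    rw [map_smul, ← algebraMap_smul Fqm]
    exact Submodule.smul_mem _ _ (Submodule.subset_span ⟨i, rfl⟩)
  refine (Submodule.finrank_mono hle).trans ?_
  exact (finrank_range_le_card _).trans (by simp)

theorem finrank_VL (L : Submodule Fq (Fin n → Fq)) :
    finrank Fqm (VL Fqm L) = finrank Fq L := by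
  obtain ⟨L', hL⟩ := Submodule.exists_isCompl L
  have h1 := finrank_VL_le (Fqm := Fqm) L
  have h2 := finrank_VL_le (Fqm := Fqm) L'
  have h3 := Submodule.finrank_add_eq_of_isCompl hL
  have htop : VL Fqm L ⊔ VL Fqm L' = ⊤ := by
    rw [eq_top_iff, ← (Pi.basisFun Fqm (Fin n)).span_eq, Submodule.span_le]
    rintro _ ⟨j, rfl⟩
    have hm : (Pi.single j 1 : Fin n → Fq) ∈ L ⊔ L' := by rw [hL.sup_eq_top]; trivial
    obtain ⟨a, ha, c, hc, hac⟩ := Submodule.mem_sup.1 hm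
    have he : Pi.basisFun Fqm (Fin n) j = embFq Fq Fqm a + embFq Fq Fqm c := by
      rw [← map_add, hac]
      ext i
      by_cases hij : i = j
      · subst hij; simp [embFq]
      · simp [embFq, hij]
    rw [he]
    exact Submodule.add_mem_sup (Submodule.subset_span ⟨a, ha, rfl⟩)
      (Submodule.subset_span ⟨c, hc, rfl⟩)
  have h4 := Submodule.finrank_sup_add_finrank_inf_eq (VL Fqm L) (VL Fqm L')
  rw [htop] at h4
  simp only [finrank_top, finrank_fin_fun] at h3 h4
  omega

theorem perp_VL (L : Submodule Fq (Fin n → Fq)) : perp (VL Fqm L) = VL Fqm (perp L) := by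
  symm
  refine Submodule.eq_of_le_of_finrank_le ?_ ?_
  · refine Submodule.span_le.2 ?_
    rintro _ ⟨x, hx, rfl⟩
    rw [SetLike.mem_coe, mem_perp]
    intro y hy
    induction hy using Submodule.span_induction with
    | mem y hy =>
      obtain ⟨z, hz, rfl⟩ := hy
      have := congrArg (algebraMap Fq Fqm) ((mem_perp L x).1 hx z hz)
      simpa [dotProduct, embFq] using this
    | zero => simp
    | add a b _ _ ha hb => rw [add_dotProduct, ha, hb, add_zero]
    | smul c a _ ha => rw [smul_dotProduct, ha, smul_zero]
  · have h1 := finrank_perp (VL Fqm L)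
    have h2 := finrank_perp L
    rw [finrank_VL] at h1 ⊢
    omega

end ext

theorem finrank_map_mkQ {K V : Type} [Field K] [AddCommGroup V] [Module K V]
    [FiniteDimensional K V] (U C : Submodule K V) :
    finrank K (C.map U.mkQ) + finrank K ↥(C ⊓ U) = finrank K C := by
  have h := LinearMap.finrank_range_add_finrank_ker (U.mkQ.domRestrict C)
  have h1 : LinearMap.range (U.mkQ.domRestrict C) = C.map U.mkQ := by
    rw [LinearMap.domRestrict, LinearMap.range_comp, Submodule.range_subtype]
  have h2 : (LinearMap.ker (U.mkQ.domRestrict C)).map C.subtype = C ⊓ U := by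
    rw [LinearMap.domRestrict, LinearMap.ker_comp, Submodule.ker_mkQ, Submodule.map_comap_subtype]
  rw [h1] at h
  rw [← h2, Submodule.finrank_map_subtype_eq]
  exact h

/-- generalized Forney lemma:
`dim C^L = dim_{Fq} L − dim (C^⊥)_L = k − dim C_{L^⊥}`. -/
theorem stmt13 (q m n k : ℕ) (Fq Fqm : Type) [Field Fq] [Field Fqm] [Algebra Fq Fqm]
    [Finite Fqm] (hq : Nat.card Fq = q) (hm : finrank Fq Fqm = m)
    (C : Submodule Fqm (Fin n → Fqm)) (hk : finrank Fqm C = k)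
    (L : Submodule Fq (Fin n → Fq)) :
    ((finrank Fqm (punct L C) : ℤ)
        = (finrank Fq L : ℤ) - (finrank Fqm ↥(perp C ⊓ VL Fqm L) : ℤ)) ∧
    ((finrank Fqm (punct L C) : ℤ)
        = (k : ℤ) - (finrank Fqm ↥(C ⊓ VL Fqm (perp L)) : ℤ)) := by
  have h1 := finrank_map_mkQ (VL Fqm (perp L)) C
  have h2 : perp C ⊓ VL Fqm L = perp (C ⊔ VL Fqm (perp L)) := by
    rw [perp_sup, perp_VL, perp_perp]
  have h3 := finrank_perp (C ⊔ VL Fqm (perp L))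
  have h4 := Submodule.finrank_sup_add_finrank_inf_eq C (VL Fqm (perp L))
  have h5 := finrank_perp L
  rw [finrank_VL] at h4
  rw [h2]
  unfold punct
  constructor <;> omega

end RankPaper
end
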